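/- With the elliptic data below, ∫_{η₁⁻¹}^{η₁} (s + s⁻¹) ds / √((η₁ − s)(s − η₁⁻¹)(η₂ − s)(s − η₂⁻¹)) = (2√((1 − l₁²)(1 − l₂²)) / l₂) · (2Π(l₁², k) − K(k)). -/

import Mathlib

/-- Complete elliptic integral of the first kind:
`K(k) = ∫₀¹ ds/√((1−s²)(1−k²s²))`. -/
noncomputable def ellK (k : ℝ) : ℝ :=
  ∫ s in (0 : ℝ)..1, 1 / Real.sqrt ((1 - s ^ 2) * (1 - k ^ 2 * s ^ 2))

/-- Complete elliptic integral of the third kind: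
`Π(m,k) = ∫₀¹ ds/((1−ms²)√((1−s²)(1−k²s²)))`. -/
noncomputable def ellPi (m k : ℝ) : ℝ :=
  ∫ s in (0 : ℝ)..1, 1 / ((1 - m * s ^ 2) * Real.sqrt ((1 - s ^ 2) * (1 - k ^ 2 * s ^ 2)))

/-- `l(x) = (x−1)/(x+1)`. -/
noncomputable def lpar (x : ℝ) : ℝ := (x - 1) / (x + 1)

/-!
For `|l| < 1` put `η = (1 + l) / (1 - l)`. The substitution `s = (1 + x) / (1 - x)` turns each
quadratic factor `(η - s) * (s - η⁻¹)` into `4 * (l² - x²) / ((1 - l²) * (1 - x)²)`, and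
`ds = 2 / (1 - x)² dx` absorbs the powers of `1 - x`. Scaling `x = l₁ * t` then gives Legendre's
normal form on `[-1, 1]`, where `s + s⁻¹ = 2 * (2 / (1 - x²) - 1)` is an even function of `x`.
-/

open MeasureTheory Set

section Cayley

/-- The real Cayley transform `x ↦ (1 + x) / (1 - x)`, the inverse of `lpar`; it is the substitution
that makes the quartic radicand even. It has the junk value `0` at `x = 1`. -/
noncomputable def cayley (x : ℝ) : ℝ := (1 + x) / (1 - x)

lemma cayley_neg (x : ℝ) : cayley (-x) = (cayley x)⁻¹ := by
  simp only [cayley, inv_div, sub_neg_eq_add, ← sub_eq_add_neg]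

lemma cayley_lpar {x : ℝ} (hx : x ≠ -1) : cayley (lpar x) = x := by
  have hx' : x + 1 ≠ 0 := fun h => hx (eq_neg_of_add_eq_zero_left h)
  have hnum : 1 + lpar x = 2 * x / (x + 1) := by unfold lpar; field_simp; ring
  have hden : 1 - lpar x = 2 / (x + 1) := by unfold lpar; field_simp; ring
  rw [cayley, hnum, hden]
  field_simp

lemma hasDerivAt_cayley {x : ℝ} (hx : x ≠ 1) : HasDerivAt cayley (2 / (1 - x) ^ 2) x := by
  have hnum : HasDerivAt (fun y : ℝ => 1 + y) 1 x := (hasDerivAt_id x).const_add 1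
  have hden : HasDerivAt (fun y : ℝ => 1 - y) (-1) x := (hasDerivAt_id x).const_sub 1
  convert! hnum.div hden (sub_ne_zero.2 hx.symm) using 1
  ring

lemma cayley_add_inv {x : ℝ} (h1 : x ≠ 1) (h2 : x ≠ -1) :
    cayley x + (cayley x)⁻¹ = 2 * (2 / (1 - x ^ 2) - 1) := by
  have hsub : 1 - x ≠ 0 := sub_ne_zero.2 h1.symm
  have hadd : 1 + x ≠ 0 := fun h => h2 (by linarith)
  rw [cayley, show 1 - x ^ 2 = (1 - x) * (1 + x) by ring]
  field_simp
  ring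

lemma cayley_sub_mul_sub_inv {l x : ℝ} (h1 : l ≠ 1) (h2 : l ≠ -1) (hx : x ≠ 1) :
    (cayley l - cayley x) * (cayley x - (cayley l)⁻¹) =
      4 * (l ^ 2 - x ^ 2) / ((1 - l ^ 2) * (1 - x) ^ 2) := by
  have hsub : 1 - l ≠ 0 := sub_ne_zero.2 h1.symm
  have hadd : 1 + l ≠ 0 := fun h => h2 (by linarith)
  have hx' : 1 - x ≠ 0 := sub_ne_zero.2 hx.symm
  rw [cayley, cayley, show 1 - l ^ 2 = (1 - l) * (1 + l) by ring]
  field_simp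
  ring

end Cayley

section lpar

lemma lpar_strictMonoOn : StrictMonoOn lpar (Ioi (-1)) := by
  intro x hx y hy hxy
  rw [mem_Ioi] at hx hy
  rw [lpar, lpar, div_lt_div_iff₀ (by linarith) (by linarith)]
  linarith

lemma abs_lpar_lt_one {x : ℝ} (hx : 0 < x) : |lpar x| < 1 := by
  rw [lpar, abs_lt, lt_div_iff₀ (by linarith), div_lt_one (by linarith)]
  constructor <;> linarith

lemma lpar_pos {x : ℝ} (hx : 1 < x) : 0 < lpar x :=
  div_pos (by linarith) (by linarith)

end lpar

section Substitution

variable {a b : ℝ}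

lemma sqrt_cayley_quartic {x : ℝ} (ha : |a| < 1) (hb : |b| < 1) (hx : x ≠ 1) :
    √((cayley a - cayley x) * (cayley x - (cayley a)⁻¹) * (cayley b - cayley x) *
        (cayley x - (cayley b)⁻¹)) =
      4 / (√((1 - a ^ 2) * (1 - b ^ 2)) * (1 - x) ^ 2) * √((a ^ 2 - x ^ 2) * (b ^ 2 - x ^ 2)) := by
  have ha' : 0 < 1 - a ^ 2 := sub_pos.2 ((sq_lt_one_iff_abs_lt_one a).2 ha)
  have hb' : 0 < 1 - b ^ 2 := sub_pos.2 ((sq_lt_one_iff_abs_lt_one b).2 hb)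
  have hx' : 1 - x ≠ 0 := sub_ne_zero.2 hx.symm
  have hC : 0 < (1 - a ^ 2) * (1 - b ^ 2) := mul_pos ha' hb'
  have hradicand : (cayley a - cayley x) * (cayley x - (cayley a)⁻¹) * (cayley b - cayley x) *
        (cayley x - (cayley b)⁻¹) =
      (4 / (√((1 - a ^ 2) * (1 - b ^ 2)) * (1 - x) ^ 2)) ^ 2 *
        ((a ^ 2 - x ^ 2) * (b ^ 2 - x ^ 2)) := by
    rw [mul_assoc, cayley_sub_mul_sub_inv (abs_lt.1 ha).2.ne (abs_lt.1 ha).1.ne' hx,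
      cayley_sub_mul_sub_inv (abs_lt.1 hb).2.ne (abs_lt.1 hb).1.ne' hx, div_pow, mul_pow,
      Real.sq_sqrt hC.le]
    field_simp
  rw [hradicand, Real.sqrt_mul (sq_nonneg _), Real.sqrt_sq (by positivity)]

lemma integral_div_sqrt_cayley_quartic (F : ℝ → ℝ) (ha : |a| < 1) (hb : |b| < 1) :
    ∫ s in (cayley a)⁻¹..cayley a,
        F s / √((cayley a - s) * (s - (cayley a)⁻¹) * (cayley b - s) * (s - (cayley b)⁻¹)) =
      √((1 - a ^ 2) * (1 - b ^ 2)) / 2 *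
        ∫ x in -a..a, F (cayley x) / √((a ^ 2 - x ^ 2) * (b ^ 2 - x ^ 2)) := by
  have hlt : ∀ x ∈ uIcc (-a) a, x < 1 := by
    intro x hx
    have : x ≤ |a| := hx.2.trans (max_le (neg_le_abs a) (le_abs_self a))
    exact this.trans_lt ha
  have hderiv : ∀ x ∈ uIcc (-a) a, HasDerivAt cayley (2 / (1 - x) ^ 2) x :=
    fun x hx => hasDerivAt_cayley (hlt x hx).ne
  rw [← cayley_neg a, ← intervalIntegral.integral_comp_mul_deriv_of_deriv_nonneg
    (fun x hx => (hderiv x hx).continuousAt.continuousWithinAt)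
    (fun x hx => hderiv x (Ioo_subset_Icc_self hx)) (fun x _ => by positivity),
    ← intervalIntegral.integral_const_mul]
  refine intervalIntegral.integral_congr fun x hx => ?_
  have hx' : 0 < 1 - x := sub_pos.2 (hlt x hx)
  simp only [Function.comp_apply, cayley_neg]
  rw [sqrt_cayley_quartic ha hb (hlt x hx).ne]
  field_simp
  ring

lemma integral_div_sqrt_quartic_eq_legendre (F : ℝ → ℝ) (ha : 0 < a) (hb : 0 < b) :
    ∫ x in -a..a, F x / √((a ^ 2 - x ^ 2) * (b ^ 2 - x ^ 2)) =
      (∫ t in (-1 : ℝ)..1, F (a * t) / √((1 - t ^ 2) * (1 - (a / b) ^ 2 * t ^ 2))) / b := by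
  have hradicand (t : ℝ) : (a ^ 2 - (a * t) ^ 2) * (b ^ 2 - (a * t) ^ 2) =
      (a * b) ^ 2 * ((1 - t ^ 2) * (1 - (a / b) ^ 2 * t ^ 2)) := by
    field_simp
  have hscale := intervalIntegral.mul_integral_comp_mul_left (a := -1) (b := 1) (c := a)
    (f := fun x => F x / √((a ^ 2 - x ^ 2) * (b ^ 2 - x ^ 2)))
  rw [mul_neg_one, mul_one] at hscale
  rw [← hscale, ← intervalIntegral.integral_const_mul, ← intervalIntegral.integral_div]
  refine intervalIntegral.integral_congr fun t _ => ?_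
  rw [hradicand, Real.sqrt_mul (sq_nonneg _), Real.sqrt_sq (by positivity)]
  field_simp

end Substitution

section Legendre

lemma integral_neg_self_of_even {E : Type*} [NormedAddCommGroup E] [NormedSpace ℝ E] {f : ℝ → E}
    {a : ℝ} (hf : f.Even) (hi : IntervalIntegrable f volume 0 a) :
    ∫ x in -a..a, f x = (2 : ℝ) • ∫ x in 0..a, f x := by
  have hreflect : ∫ x in -a..0, f x = ∫ x in 0..a, f x := by
    simpa only [hf _, neg_zero] using (intervalIntegral.integral_comp_neg (a := 0) (b := a) f).symm
  have hi' : IntervalIntegrable f volume (-a) 0 := by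
    simpa only [hf _, neg_zero] using (IntervalIntegrable.iff_comp_neg (f := f) |>.1 hi).symm
  rw [← intervalIntegral.integral_add_adjacent_intervals hi' hi, hreflect, two_smul]

variable {k m : ℝ}

lemma one_sub_mul_sq_pos {t : ℝ} (hm : m < 1) (ht : t ∈ Icc (-1) 1) : 0 < 1 - m * t ^ 2 := by
  have ht2 : t ^ 2 ≤ 1 := (sq_le_one_iff_abs_le_one t).2 (abs_le.2 ht)
  rcases le_or_gt m 0 with hm0 | hm0
  · linarith [mul_nonpos_of_nonpos_of_nonneg hm0 (sq_nonneg t)]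
  · linarith [mul_le_of_le_one_right hm0.le ht2]

lemma intervalIntegrable_div_sqrt_legendre {φ : ℝ → ℝ} (hk : |k| < 1)
    (hφ : ContinuousOn φ (Icc (-1) 1)) :
    IntervalIntegrable (fun t => φ t / √((1 - t ^ 2) * (1 - k ^ 2 * t ^ 2))) volume (-1) 1 := by
  have hk2 : k ^ 2 < 1 := (sq_lt_one_iff_abs_lt_one k).2 hk
  have hfactor : ContinuousOn (fun t => φ t / √(1 - k ^ 2 * t ^ 2)) (uIcc (-1) 1) := by
    rw [uIcc_of_le (by norm_num)]
    exact hφ.div (by fun_prop) fun t ht => (Real.sqrt_pos.2 (one_sub_mul_sq_pos hk2 ht)).ne'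
  refine (Polynomial.Chebyshev.intervalIntegrable_sqrt_one_sub_sq_inv.continuousOn_mul
    hfactor).congr_uIoo fun t ht => ?_
  rw [uIoo_of_le (by norm_num)] at ht
  have ht2 : 0 ≤ 1 - t ^ 2 :=
    sub_nonneg.2 ((sq_le_one_iff_abs_le_one t).2 (abs_le.2 ⟨ht.1.le, ht.2.le⟩))
  simp only [Real.sqrt_mul ht2, Real.sqrt_inv]
  field_simp

lemma integral_div_sqrt_legendre (hm : m < 1) (hk : |k| < 1) :
    ∫ t in (-1 : ℝ)..1, (2 / (1 - m * t ^ 2) - 1) / √((1 - t ^ 2) * (1 - k ^ 2 * t ^ 2)) =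
      2 * (2 * ellPi m k - ellK k) := by
  have hsub : uIcc (0 : ℝ) 1 ⊆ uIcc (-1) 1 := uIcc_subset_uIcc_right (by norm_num [mem_uIcc])
  have hK := (intervalIntegrable_div_sqrt_legendre hk (φ := fun _ => 1)
    continuousOn_const).mono_set hsub
  have hPi := (intervalIntegrable_div_sqrt_legendre hk (φ := fun t => 1 / (1 - m * t ^ 2))
    (continuousOn_const.div (by fun_prop)
      fun t ht => (one_sub_mul_sq_pos hm ht).ne')).mono_set hsub
  have hsplit (t : ℝ) : (2 / (1 - m * t ^ 2) - 1) / √((1 - t ^ 2) * (1 - k ^ 2 * t ^ 2)) =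
      2 * (1 / (1 - m * t ^ 2) / √((1 - t ^ 2) * (1 - k ^ 2 * t ^ 2))) -
        1 / √((1 - t ^ 2) * (1 - k ^ 2 * t ^ 2)) := by
    ring
  simp only [hsplit]
  rw [integral_neg_self_of_even (fun t => by simp only [neg_sq]) ((hPi.const_mul 2).sub hK),
    intervalIntegral.integral_sub (hPi.const_mul 2) hK, intervalIntegral.integral_const_mul]
  simp only [ellPi, ellK, div_div, smul_eq_mul]

lemma integral_cayley_add_inv_legendre {a : ℝ} (ha : |a| < 1) (hk : |k| < 1) :
    ∫ t in (-1 : ℝ)..1, (cayley (a * t) + (cayley (a * t))⁻¹) /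
        √((1 - t ^ 2) * (1 - k ^ 2 * t ^ 2)) =
      4 * (2 * ellPi (a ^ 2) k - ellK k) := by
  have hsum : ∀ t ∈ uIcc (-1 : ℝ) 1,
      cayley (a * t) + (cayley (a * t))⁻¹ = 2 * (2 / (1 - a ^ 2 * t ^ 2) - 1) := by
    intro t ht
    rw [uIcc_of_le (by norm_num)] at ht
    have hat : |a * t| < 1 := by
      rw [abs_mul]
      exact mul_lt_one_of_nonneg_of_lt_one_left (abs_nonneg a) ha (abs_le.2 ht)
    rw [cayley_add_inv (abs_lt.1 hat).2.ne (abs_lt.1 hat).1.ne', mul_pow]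
  calc
    _ = ∫ t in (-1 : ℝ)..1, 2 * ((2 / (1 - a ^ 2 * t ^ 2) - 1) /
          √((1 - t ^ 2) * (1 - k ^ 2 * t ^ 2))) :=
      intervalIntegral.integral_congr fun t ht => by simp only [hsum t ht, mul_div_assoc]
    _ = 2 * (2 * (2 * ellPi (a ^ 2) k - ellK k)) := by
      rw [intervalIntegral.integral_const_mul,
        integral_div_sqrt_legendre ((sq_lt_one_iff_abs_lt_one a).2 ha) hk]
    _ = 4 * (2 * ellPi (a ^ 2) k - ellK k) := by ring

end Legendre

/- STATEMENT 12: With 1 < η₁ < η₂, l₁ = (η₁−1)/(η₁+1), l₂ = (η₂−1)/(η₂+1),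
k = l₁/l₂, one has
∫_{η₁⁻¹}^{η₁} (s + s⁻¹) ds / √((η₁ − s)(s − η₁⁻¹)(η₂ − s)(s − η₂⁻¹))
  = (2√((1 − l₁²)(1 − l₂²)) / l₂) · (2Π(l₁², k) − K(k)). -/
theorem stmt12 (η₁ η₂ : ℝ) (h1 : 1 < η₁) (h2 : η₁ < η₂) :
    (∫ s in η₁⁻¹..η₁,
        (s + s⁻¹) / Real.sqrt ((η₁ - s) * (s - η₁⁻¹) * (η₂ - s) * (s - η₂⁻¹))) =
      2 * Real.sqrt ((1 - lpar η₁ ^ 2) * (1 - lpar η₂ ^ 2)) / lpar η₂ *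
        (2 * ellPi (lpar η₁ ^ 2) (lpar η₁ / lpar η₂) - ellK (lpar η₁ / lpar η₂)) := by
  have hpos₁ : 0 < lpar η₁ := lpar_pos h1
  have hpos₂ : 0 < lpar η₂ := lpar_pos (h1.trans h2)
  have habs₁ : |lpar η₁| < 1 := abs_lpar_lt_one (by linarith)
  have habs₂ : |lpar η₂| < 1 := abs_lpar_lt_one (by linarith)
  have hk : |lpar η₁ / lpar η₂| < 1 := by
    rw [abs_of_pos (div_pos hpos₁ hpos₂), div_lt_one hpos₂]
    exact lpar_strictMonoOn (mem_Ioi.2 (by linarith)) (mem_Ioi.2 (by linarith)) h2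
  have hsubst := integral_div_sqrt_cayley_quartic (fun s => s + s⁻¹) habs₁ habs₂
  rw [cayley_lpar (by linarith), cayley_lpar (by linarith)] at hsubst
  rw [hsubst,
    integral_div_sqrt_quartic_eq_legendre (fun x => cayley x + (cayley x)⁻¹) hpos₁ hpos₂,
    integral_cayley_add_inv_legendre habs₁ hk]
  ring
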